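/- Let C be a pivotal category. The maps σ are natural: for all morphisms f : X → X' and g : Y → Y' in C and every α ∈ Hom(𝟙, X⊗Y): (g ⊗ f) ∘ σ_{X,Y}(α) = σ_{X',Y'}((f ⊗ g) ∘ α). -/

import Mathlib

open CategoryTheory CategoryTheory.Limits MonoidalCategory

universe v u w

/-- A pivotal category: a monoidal category in which every object is equipped with a dual
object and with evaluation/coevaluation morphisms forming a left duality and a right
duality, such that left and right duals of morphisms coincide, the left and right
monoidal constraints coincide, and the left and right evaluations of the unit coincide. -/
class PivotalCat (C : Type u) [Category.{v} C] [MonoidalCategory C] where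
  dual : C → C
  evl : ∀ X : C, dual X ⊗ X ⟶ 𝟙_ C
  coevl : ∀ X : C, 𝟙_ C ⟶ X ⊗ dual X
  evr : ∀ X : C, X ⊗ dual X ⟶ 𝟙_ C
  coevr : ∀ X : C, 𝟙_ C ⟶ dual X ⊗ X
  left_zigzag₁ : ∀ X : C,
    (λ_ X).inv ≫ (coevl X ▷ X) ≫ (α_ X (dual X) X).hom ≫ (X ◁ evl X) ≫ (ρ_ X).hom = 𝟙 X
  left_zigzag₂ : ∀ X : C,
    (ρ_ (dual X)).inv ≫ (dual X ◁ coevl X) ≫ (α_ (dual X) X (dual X)).inv ≫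
      (evl X ▷ dual X) ≫ (λ_ (dual X)).hom = 𝟙 (dual X)
  right_zigzag₁ : ∀ X : C,
    (ρ_ X).inv ≫ (X ◁ coevr X) ≫ (α_ X (dual X) X).inv ≫ (evr X ▷ X) ≫ (λ_ X).hom = 𝟙 X
  right_zigzag₂ : ∀ X : C,
    (λ_ (dual X)).inv ≫ (coevr X ▷ dual X) ≫ (α_ (dual X) X (dual X)).hom ≫
      (dual X ◁ evr X) ≫ (ρ_ (dual X)).hom = 𝟙 (dual X)
  ldual_eq_rdual : ∀ {X Y : C} (f : X ⟶ Y),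
    (ρ_ (dual Y)).inv ≫ (dual Y ◁ coevl X) ≫ (dual Y ◁ (f ▷ dual X)) ≫
      (α_ (dual Y) Y (dual X)).inv ≫ (evl Y ▷ dual X) ≫ (λ_ (dual X)).hom =
    (λ_ (dual Y)).inv ≫ (coevr X ▷ dual Y) ≫ ((dual X ◁ f) ▷ dual Y) ≫
      (α_ (dual X) Y (dual Y)).hom ≫ (dual X ◁ evr Y) ≫ (ρ_ (dual X)).hom
  constraint_eq : ∀ X Y : C,
    (ρ_ (dual X ⊗ dual Y)).inv ≫ ((dual X ⊗ dual Y) ◁ coevl (Y ⊗ X)) ≫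
      (α_ (dual X) (dual Y) ((Y ⊗ X) ⊗ dual (Y ⊗ X))).hom ≫
      (dual X ◁ (α_ (dual Y) (Y ⊗ X) (dual (Y ⊗ X))).inv) ≫
      (dual X ◁ (((α_ (dual Y) Y X).inv ≫ (evl Y ▷ X) ≫ (λ_ X).hom) ▷ dual (Y ⊗ X))) ≫
      (α_ (dual X) X (dual (Y ⊗ X))).inv ≫ (evl X ▷ dual (Y ⊗ X)) ≫ (λ_ (dual (Y ⊗ X))).hom =
    (λ_ (dual X ⊗ dual Y)).inv ≫ (coevr (Y ⊗ X) ▷ (dual X ⊗ dual Y)) ≫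
      (α_ (dual (Y ⊗ X)) (Y ⊗ X) (dual X ⊗ dual Y)).hom ≫
      (dual (Y ⊗ X) ◁ ((α_ Y X (dual X ⊗ dual Y)).hom ≫ (Y ◁ (α_ X (dual X) (dual Y)).inv) ≫
        (Y ◁ (evr X ▷ dual Y)) ≫ (Y ◁ (λ_ (dual Y)).hom) ≫ evr Y)) ≫
      (ρ_ (dual (Y ⊗ X))).hom
  ev_unit : (ρ_ (dual (𝟙_ C))).inv ≫ evl (𝟙_ C) = (λ_ (dual (𝟙_ C))).inv ≫ evr (𝟙_ C)

namespace PivotalCat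

variable {C : Type u} [Category.{v} C] [MonoidalCategory C] [PivotalCat C]

/-- The (common left = right) dual of a morphism. -/
def pdual {X Y : C} (f : X ⟶ Y) : dual Y ⟶ dual X :=
  (ρ_ (dual Y)).inv ≫ (dual Y ◁ coevl X) ≫ (dual Y ◁ (f ▷ dual X)) ≫
    (α_ (dual Y) Y (dual X)).inv ≫ (evl Y ▷ dual X) ≫ (λ_ (dual X)).hom

/-- The (common left = right) pivotal monoidal constraint `X* ⊗ Y* ⟶ (Y ⊗ X)*`. -/
def mcon (X Y : C) : dual X ⊗ dual Y ⟶ dual (Y ⊗ X) :=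
  (ρ_ (dual X ⊗ dual Y)).inv ≫ ((dual X ⊗ dual Y) ◁ coevl (Y ⊗ X)) ≫
    (α_ (dual X) (dual Y) ((Y ⊗ X) ⊗ dual (Y ⊗ X))).hom ≫
    (dual X ◁ (α_ (dual Y) (Y ⊗ X) (dual (Y ⊗ X))).inv) ≫
    (dual X ◁ (((α_ (dual Y) Y X).inv ≫ (evl Y ▷ X) ≫ (λ_ X).hom) ▷ dual (Y ⊗ X))) ≫
    (α_ (dual X) X (dual (Y ⊗ X))).inv ≫ (evl X ▷ dual (Y ⊗ X)) ≫ (λ_ (dual (Y ⊗ X))).hom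

/-- The left trace of an endomorphism. -/
def trl {X : C} (f : X ⟶ X) : 𝟙_ C ⟶ 𝟙_ C := coevr X ≫ (dual X ◁ f) ≫ evl X

/-- The right trace of an endomorphism. -/
def trr {X : C} (f : X ⟶ X) : 𝟙_ C ⟶ 𝟙_ C := coevl X ≫ (f ▷ dual X) ≫ evr X

/-- The left dimension of an object, as an endomorphism of the unit. -/
def diml (X : C) : 𝟙_ C ⟶ 𝟙_ C := trl (𝟙 X)

/-- The right dimension of an object, as an endomorphism of the unit. -/
def dimr (X : C) : 𝟙_ C ⟶ 𝟙_ C := trr (𝟙 X)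

/-- The permutation map `σ_{X,Y} : Hom(𝟙, X ⊗ Y) → Hom(𝟙, Y ⊗ X)`,
`α ↦ (ev_l X ⊗ id_{Y⊗X}) ∘ (id_{X*} ⊗ α ⊗ id_X) ∘ coev_r X`. -/
def sigmaMap (X Y : C) (a : 𝟙_ C ⟶ X ⊗ Y) : 𝟙_ C ⟶ Y ⊗ X :=
  coevr X ≫ (dual X ◁ (λ_ X).inv) ≫ (dual X ◁ (a ▷ X)) ≫ (dual X ◁ (α_ X Y X).hom) ≫
    (α_ (dual X) X (Y ⊗ X)).inv ≫ (evl X ▷ (Y ⊗ X)) ≫ (λ_ (Y ⊗ X)).hom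

end PivotalCat

/-- A pivotal category is spherical when left and right traces coincide. -/
class SphericalCat (C : Type u) [Category.{v} C] [MonoidalCategory C] [PivotalCat C] : Prop where
  tr_eq : ∀ {X : C} (f : X ⟶ X), PivotalCat.trl f = PivotalCat.trr f

/-!
In string diagrams, `σ_{X,Y}(α)` carries the strand `X` of `α` around the cap `evl X` and the cup
`coevr X`. A morphism `f` on that strand slides through the cap to become its left dual on `X*`,
then through the cup, where it has to be the right dual. The two duals agree in a pivotal category,
so `f` emerges at the other end of the strand.
-/

namespace PivotalCat

section Rotate

variable {C : Type u} [Category.{v} C] [MonoidalCategory C] {D D' W X Y Y' Z Z' : C}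

/-- Transport of the left leg of `a : 𝟙 ⟶ X ⊗ Y` to the right, along a cap `e : D ⊗ X ⟶ 𝟙` and a
cup `c : 𝟙 ⟶ D ⊗ Z`. The map `σ_{X,Y}` is the case `e = evl X`, `c = coevr X`; leaving `e` and `c`
arbitrary, with possibly different objects `X` and `Z`, lets a morphism be moved step by step along
the strand. -/
def rotate (e : D ⊗ X ⟶ 𝟙_ C) (c : 𝟙_ C ⟶ D ⊗ Z) (a : 𝟙_ C ⟶ X ⊗ Y) : 𝟙_ C ⟶ Y ⊗ Z :=
  c ≫ (D ◁ (λ_ Z).inv) ≫ (D ◁ (a ▷ Z)) ≫ (D ◁ (α_ X Y Z).hom) ≫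
    (α_ D X (Y ⊗ Z)).inv ≫ (e ▷ (Y ⊗ Z)) ≫ (λ_ (Y ⊗ Z)).hom

theorem rotate_comp_whiskerRight (e : D ⊗ X ⟶ 𝟙_ C) (c : 𝟙_ C ⟶ D ⊗ Z) (a : 𝟙_ C ⟶ X ⊗ Y)
    (g : Y ⟶ Y') : rotate e c a ≫ g ▷ Z = rotate e c (a ≫ X ◁ g) := by
  simp only [rotate, Category.assoc]
  rw [← leftUnitor_naturality, ← whisker_exchange_assoc]
  monoidal

theorem rotate_comp_whiskerLeft (e : D ⊗ X ⟶ 𝟙_ C) (c : 𝟙_ C ⟶ D ⊗ Z) (a : 𝟙_ C ⟶ X ⊗ Y)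
    (h : Z ⟶ Z') : rotate e c a ≫ Y ◁ h = rotate e (c ≫ D ◁ h) a := by
  have slide_past_a : D ◁ h ≫ D ◁ (λ_ Z').inv ≫ D ◁ (a ▷ Z') =
      D ◁ (λ_ Z).inv ≫ D ◁ (a ▷ Z) ≫ D ◁ (X ⊗ Y) ◁ h := by
    simp only [← whiskerLeft_comp, leftUnitor_inv_naturality_assoc, whisker_exchange]
  simp only [rotate, Category.assoc]
  rw [reassoc_of% slide_past_a, ← leftUnitor_naturality, ← whisker_exchange_assoc]
  monoidal

theorem rotate_apply_comp_whiskerRight (e : D ⊗ X ⟶ 𝟙_ C) (c : 𝟙_ C ⟶ D ⊗ Z) (a : 𝟙_ C ⟶ W ⊗ Y)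
    (f : W ⟶ X) : rotate e c (a ≫ f ▷ Y) = rotate (D ◁ f ≫ e) c a := by
  unfold rotate
  monoidal

theorem rotate_cup_comp_whiskerRight (e : D ⊗ X ⟶ 𝟙_ C) (c : 𝟙_ C ⟶ D' ⊗ Z)
    (a : 𝟙_ C ⟶ X ⊗ Y) (d : D' ⟶ D) :
    rotate e (c ≫ d ▷ Z) a = rotate (d ▷ X ≫ e) c a := by
  simp only [rotate, Category.assoc, ← whisker_exchange_assoc]
  monoidal

end Rotate

section Duals

variable {C : Type u} [Category.{v} C] [MonoidalCategory C] [PivotalCat C] {X Y : C}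

/-- The left duality of a pivotal category, which makes `dual X` a *right* dual of `X` in Mathlib's
convention. It is kept local since `𝟙_ C` already has a right dual instance. -/
local instance hasRightDual (X : C) : HasRightDual X where
  rightDual := dual X
  exact :=
    { coevaluation' := coevl X
      evaluation' := evl X
      coevaluation_evaluation' := by
        rw [← cancel_epi (ρ_ _).inv, ← cancel_mono (λ_ _).hom]
        simpa using left_zigzag₂ X
      evaluation_coevaluation' := by
        rw [← cancel_epi (λ_ _).inv, ← cancel_mono (ρ_ _).hom]
        simpa using left_zigzag₁ X }

/-- The right duality of a pivotal category, which makes `dual X` a *left* dual of `X` in Mathlib's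
convention. It is kept local since `𝟙_ C` already has a left dual instance. -/
local instance hasLeftDual (X : C) : HasLeftDual X where
  leftDual := dual X
  exact :=
    { coevaluation' := coevr X
      evaluation' := evr X
      coevaluation_evaluation' := by
        rw [← cancel_epi (ρ_ _).inv, ← cancel_mono (λ_ _).hom]
        simpa using right_zigzag₁ X
      evaluation_coevaluation' := by
        rw [← cancel_epi (λ_ _).inv, ← cancel_mono (ρ_ _).hom]
        simpa using right_zigzag₂ X }

theorem pdual_eq_rightAdjointMate (f : X ⟶ Y) : pdual f = rightAdjointMate f :=
  rfl

theorem pdual_eq_leftAdjointMate (f : X ⟶ Y) : pdual f = leftAdjointMate f :=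
  ldual_eq_rdual f

theorem pdual_whiskerRight_comp_evl (f : X ⟶ Y) : pdual f ▷ X ≫ evl X = dual Y ◁ f ≫ evl Y := by
  rw [pdual_eq_rightAdjointMate]
  exact rightAdjointMate_comp_evaluation f

theorem coevr_comp_pdual_whiskerRight (f : X ⟶ Y) :
    coevr Y ≫ pdual f ▷ Y = coevr X ≫ dual X ◁ f := by
  rw [pdual_eq_leftAdjointMate]
  exact coevaluation_comp_leftAdjointMate f

theorem sigmaMap_eq_rotate (X Y : C) (a : 𝟙_ C ⟶ X ⊗ Y) :
    sigmaMap X Y a = rotate (evl X) (coevr X) a :=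
  rfl

end Duals

end PivotalCat

open PivotalCat in
/-- Naturality of the permutation maps: for `f : X ⟶ X'`, `g : Y ⟶ Y'` and
`α : 𝟙 ⟶ X ⊗ Y`, one has `(g ⊗ f) ∘ σ_{X,Y}(α) = σ_{X',Y'}((f ⊗ g) ∘ α)`. -/
theorem sigmaMap_natural {C : Type u} [Category.{v} C] [MonoidalCategory C] [PivotalCat C]
    {X X' Y Y' : C} (f : X ⟶ X') (g : Y ⟶ Y') (a : 𝟙_ C ⟶ X ⊗ Y) :
    sigmaMap X Y a ≫ (g ⊗ₘ f) = sigmaMap X' Y' (a ≫ (f ⊗ₘ g)) := by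
  calc
    sigmaMap X Y a ≫ (g ⊗ₘ f)
      = rotate (evl X) (coevr X ≫ dual X ◁ f) (a ≫ X ◁ g) := by
        rw [sigmaMap_eq_rotate, MonoidalCategory.tensorHom_def, ← Category.assoc,
          rotate_comp_whiskerRight, rotate_comp_whiskerLeft]
    _ = rotate (evl X) (coevr X' ≫ pdual f ▷ X') (a ≫ X ◁ g) := by
        rw [coevr_comp_pdual_whiskerRight]
    _ = rotate (pdual f ▷ X ≫ evl X) (coevr X') (a ≫ X ◁ g) :=
        rotate_cup_comp_whiskerRight ..
    _ = rotate (dual X' ◁ f ≫ evl X') (coevr X') (a ≫ X ◁ g) := by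
        rw [pdual_whiskerRight_comp_evl]
    _ = sigmaMap X' Y' (a ≫ (f ⊗ₘ g)) := by
        rw [← rotate_apply_comp_whiskerRight, Category.assoc, ← tensorHom_def', sigmaMap_eq_rotate]
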